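/- arXiv:2007.11297 — 2 statements merged into one kernel-verified Lean document; each statement's English description precedes it below -/
import Mathlib

section
/- Let u be a C² strictly convex function on B_R(0) ⊂ ℝ² with ∂_{x₁x₁}u > 0, solving det D²u = f in B_R(0) with f > 0, and let u* be its partial Legendre transform in the e₁-direction with associated map 𝒫(x₁,x₂) = (∂_{x₁}u(x₁,x₂), x₂). Then u* satisfies the quasilinear elliptic equation f(∂_{y₁}u*(y), y₂) · ∂_{y₁y₁}u*(y) + ∂_{y₂y₂}u*(y) = 0 at every point y of the open set 𝒫(B_R(0)). In particular, if f ≡ 1 then u* is harmonic on 𝒫(B_R(0)). -/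
open Metric Set MeasureTheory

noncomputable section

abbrev E2 : Type := EuclideanSpace ℝ (Fin 2)

/-- The point of `ℝ²` with coordinates `(a, b)`. -/
def pt (a b : ℝ) : E2 := (WithLp.equiv 2 (Fin 2 → ℝ)).symm ![a, b]

/-- The standard basis vectors of `ℝ²`. -/
def e2 (i : Fin 2) : E2 := EuclideanSpace.single i 1

/-- The Hessian matrix `D²u(x)`. -/
def hess (u : E2 → ℝ) (x : E2) : Matrix (Fin 2) (Fin 2) ℝ :=
  Matrix.of fun i j => iteratedFDeriv ℝ 2 u x ![e2 i, e2 j]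

/-- The determinant of the Hessian, `det D²u(x)`. -/
def detHess (u : E2 → ℝ) (x : E2) : ℝ := (hess u x).det

/-- The operator norm of a `2 × 2` real matrix. -/
def opNorm2 (M : Matrix (Fin 2) (Fin 2) ℝ) : ℝ :=
  ‖(Matrix.toEuclideanCLM (𝕜 := ℝ) M : E2 →L[ℝ] E2)‖

/-- The partial Legendre transform of `u` in the `e₁`-direction (relative to `B_R(0)`). -/
def pLeg (R : ℝ) (u : E2 → ℝ) (y : E2) : ℝ :=
  sSup ((fun x₁ => x₁ * y 0 - u (pt x₁ (y 1))) '' {x₁ : ℝ | pt x₁ (y 1) ∈ ball (0:E2) R})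

/-- The partial Legendre map `𝒫(x₁,x₂) = (∂_{x₁}u(x), x₂)`. -/
def Pmap (u : E2 → ℝ) (x : E2) : E2 := pt (fderiv ℝ u x (e2 0)) (x 1)

open Filter Topology

lemma aux_pt0 (a b : ℝ) : pt a b 0 = a := by simp [pt]

lemma aux_pt1 (a b : ℝ) : pt a b 1 = b := by simp [pt]

lemma aux_pt_eta (x : E2) : pt (x 0) (x 1) = x := by
  ext i; fin_cases i <;> simp [pt]

lemma aux_pt_eq (a b : ℝ) : pt a b = a • e2 0 + b • e2 1 := by
  ext i; fin_cases i <;> simp [pt, e2]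

lemma aux_decomp (x : E2) : x = x 0 • e2 0 + x 1 • e2 1 := by
  rw [← aux_pt_eq, aux_pt_eta]

lemma aux_hess (u : E2 → ℝ) (x : E2) (i j : Fin 2) :
    hess u x i j = fderiv ℝ (fderiv ℝ u) x (e2 i) (e2 j) := by
  simp [hess, iteratedFDeriv_two_apply]

lemma aux_coord (x : E2) (i : Fin 2) :
    HasFDerivAt (fun x : E2 => x i) (EuclideanSpace.proj i : E2 →L[ℝ] ℝ) x :=
  (EuclideanSpace.proj i : E2 →L[ℝ] ℝ).hasFDerivAt

lemma aux_convex {s : Set E2} {u : E2 → ℝ} (hc : ConvexOn ℝ s u) {x z : E2}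
    (hx : x ∈ s) (hz : z ∈ s) (hd : DifferentiableAt ℝ u x) :
    u x + fderiv ℝ u x (z - x) ≤ u z := by
  have h1 : ConvexOn ℝ (Icc (0:ℝ) 1) (fun t => u (AffineMap.lineMap x z t)) := by
    refine (hc.comp_affineMap (AffineMap.lineMap x z)).subset ?_ (convex_Icc _ _)
    intro t ht
    exact hc.1.lineMap_mem hx hz ht
  have h2 : HasDerivAt (fun t : ℝ => u (AffineMap.lineMap x z t)) (fderiv ℝ u x (z - x)) 0 := by
    have h3 : HasDerivAt (fun t : ℝ => (AffineMap.lineMap x z t : E2)) (z - x) 0 :=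
      AffineMap.hasDerivAt_lineMap
    have h4 : HasFDerivAt u (fderiv ℝ u x) ((AffineMap.lineMap x z : ℝ →ᵃ[ℝ] E2) 0) := by
      simpa using hd.hasFDerivAt
    exact h4.comp_hasDerivAt (0:ℝ) h3
  have h5 := h1.le_slope_of_hasDerivAt (x := 0) (y := 1) (by simp) (by simp) one_pos h2
  simp [slope_def_field] at h5
  simp
  linarith

lemma aux_pLeg {R : ℝ} {u : E2 → ℝ} (hc : ConvexOn ℝ (ball (0:E2) R) u) {x : E2}
    (hx : x ∈ ball (0:E2) R) (hd : DifferentiableAt ℝ u x) :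
    pLeg R u (Pmap u x) = x 0 * (fderiv ℝ u x (e2 0)) - u x := by
  unfold pLeg
  apply IsGreatest.csSup_eq
  constructor
  · refine ⟨x 0, ?_, ?_⟩
    · simpa [Pmap, aux_pt1, aux_pt_eta] using hx
    · simp [Pmap, aux_pt1, aux_pt0, aux_pt_eta]
  · rintro _ ⟨t, ht, rfl⟩
    have ht' : pt t (x 1) ∈ ball (0:E2) R := by simpa [Pmap, aux_pt1] using ht
    have h := aux_convex hc hx ht' hd
    have e : pt t (x 1) - x = (t - x 0) • e2 0 := by
      nth_rw 2 [aux_decomp x]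
      rw [aux_pt_eq, sub_smul]; abel
    rw [e, map_smul, smul_eq_mul] at h
    simp only [Pmap, aux_pt1, aux_pt0]
    linarith

lemma aux_Pmap_deriv {u : E2 → ℝ} {x : E2} (hu : ContDiffAt ℝ 2 u x) :
    HasFDerivAt (Pmap u)
      ((((fderiv ℝ (fderiv ℝ u) x).flip (e2 0)).smulRight (e2 0)) +
        (EuclideanSpace.proj 1 : E2 →L[ℝ] ℝ).smulRight (e2 1)) x := by
  have h1 : ContDiffAt ℝ 1 (fderiv ℝ u) x := hu.fderiv_right (by norm_num)
  have h2 := (h1.differentiableAt (by norm_num)).hasFDerivAt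
  have h3 : HasFDerivAt (fun x => fderiv ℝ u x (e2 0)) ((fderiv ℝ (fderiv ℝ u) x).flip (e2 0)) x := by
    convert! h2.clm_apply (hasFDerivAt_const (e2 0) x) using 1
    ext v; simp
  have h4 := (h3.smul_const (e2 0)).add ((aux_coord x 1).smul_const (e2 1))
  have e : Pmap u = fun x => fderiv ℝ u x (e2 0) • e2 0 + x 1 • e2 1 := by
    funext x; rw [Pmap, aux_pt_eq]
  rw [e]
  exact h4

lemma aux_Pmap_C1 {u : E2 → ℝ} {x : E2} (hu : ContDiffAt ℝ 2 u x) :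
    ContDiffAt ℝ 1 (Pmap u) x := by
  have h1 : ContDiffAt ℝ 1 (fderiv ℝ u) x := hu.fderiv_right (by norm_num)
  have e : Pmap u = fun x => fderiv ℝ u x (e2 0) • e2 0 +
      (EuclideanSpace.proj 1 : E2 →L[ℝ] ℝ) x • e2 1 := by
    funext x; rw [Pmap, aux_pt_eq]; rfl
  rw [e]
  exact ((h1.clm_apply contDiffAt_const).smul contDiffAt_const).add
    ((EuclideanSpace.proj 1 : E2 →L[ℝ] ℝ).contDiff.contDiffAt.smul contDiffAt_const)

lemma aux_inv {u : E2 → ℝ} {x : E2} (hu : ContDiffAt ℝ 2 u x) (h11 : 0 < hess u x 0 0) :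
    ∃ g : E2 → E2, g (Pmap u x) = x ∧ ContDiffAt ℝ 1 g (Pmap u x) ∧
      ∀ᶠ y in 𝓝 (Pmap u x), Pmap u (g y) = y := by
  have hD := aux_Pmap_deriv hu
  set L := ((((fderiv ℝ (fderiv ℝ u) x).flip (e2 0)).smulRight (e2 0)) +
        (EuclideanSpace.proj 1 : E2 →L[ℝ] ℝ).smulRight (e2 1)) with hL
  have hinj : Function.Injective (L : E2 →ₗ[ℝ] E2) := by
    rw [injective_iff_map_eq_zero]
    intro v hv
    have hv' : pt (fderiv ℝ (fderiv ℝ u) x v (e2 0)) (v 1) = 0 := by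
      rw [aux_pt_eq]; exact hv
    have c1 : v 1 = 0 := by
      have := congrArg (fun w : E2 => w 1) hv'
      simpa [aux_pt1] using this
    have c0 : fderiv ℝ (fderiv ℝ u) x v (e2 0) = 0 := by
      have := congrArg (fun w : E2 => w 0) hv'
      simpa [aux_pt0] using this
    rw [aux_decomp v, c1, zero_smul, add_zero, map_smul] at c0
    simp only [ContinuousLinearMap.smul_apply, smul_eq_mul] at c0
    rw [← aux_hess] at c0
    have c2 : v 0 = 0 := by
      rcases mul_eq_zero.1 c0 with h | h
      · exact h
      · exact absurd h h11.ne'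
    rw [aux_decomp v, c1, c2]; simp
  let e : E2 ≃L[ℝ] E2 := (LinearEquiv.ofInjectiveEndo (L : E2 →ₗ[ℝ] E2) hinj).toContinuousLinearEquiv
  have he : (e : E2 →L[ℝ] E2) = L := by ext v : 1; rfl
  rw [← he] at hD
  have hC := aux_Pmap_C1 hu
  exact ⟨hC.localInverse hD one_ne_zero, hC.localInverse_apply_image hD one_ne_zero,
    hC.to_localInverse hD one_ne_zero,
    (hC.hasStrictFDerivAt' hD one_ne_zero).eventually_right_inverse⟩

lemma aux_Pmap_eq {u : E2 → ℝ} {x y : E2} (h : Pmap u x = y) :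
    fderiv ℝ u x (e2 0) = y 0 ∧ x 1 = y 1 := by
  subst h
  simp [Pmap, aux_pt0, aux_pt1]

/-- first derivative of the partial Legendre transform -/
lemma aux_first {R : ℝ} {u : E2 → ℝ} (hc : ConvexOn ℝ (ball (0:E2) R) u)
    (hu : ∀ x ∈ ball (0:E2) R, ContDiffAt ℝ 2 u x) {g : E2 → E2} {y : E2}
    (hg : DifferentiableAt ℝ g y) (hP : ∀ᶠ z in 𝓝 y, Pmap u (g z) = z)
    (hb : ∀ᶠ z in 𝓝 y, g z ∈ ball (0:E2) R) :
    fderiv ℝ (pLeg R u) y = (g y 0) • (EuclideanSpace.proj 0 : E2 →L[ℝ] ℝ)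
      - (fderiv ℝ u (g y) (e2 1)) • (EuclideanSpace.proj 1 : E2 →L[ℝ] ℝ) := by
  have hE : pLeg R u =ᶠ[𝓝 y] fun z => g z 0 * z 0 - u (g z) := by
    filter_upwards [hP, hb] with z h1 h2
    have := aux_pLeg hc h2 ((hu _ h2).differentiableAt (by norm_num))
    rw [h1, (aux_Pmap_eq h1).1] at this
    exact this
  have hby := hb.self_of_nhds
  have hG := hg.hasFDerivAt
  have hU := ((hu _ hby).differentiableAt (by norm_num)).hasFDerivAt
  have hg0 := (aux_coord (g y) 0).comp y hG
  have hg1 := (aux_coord (g y) 1).comp y hG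
  have hg1' : (EuclideanSpace.proj 1 : E2 →L[ℝ] ℝ).comp (fderiv ℝ g y) =
      (EuclideanSpace.proj 1 : E2 →L[ℝ] ℝ) := by
    refine hg1.unique ((aux_coord y 1).congr_of_eventuallyEq ?_)
    filter_upwards [hP] with z hz
    exact (aux_Pmap_eq hz).2
  have hF := (hg0.mul (aux_coord y 0)).sub (hU.comp y hG)
  have hF2 := hF.congr_of_eventuallyEq hE
  rw [hF2.fderiv]
  ext v
  have k1 : (fderiv ℝ g y v) 1 = v 1 := congrArg (fun l : E2 →L[ℝ] ℝ => l v) hg1'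
  have k2 : fderiv ℝ u (g y) (fderiv ℝ g y v) =
      (fderiv ℝ g y v) 0 * y 0 + v 1 * fderiv ℝ u (g y) (e2 1) := by
    conv_lhs => rw [aux_decomp (fderiv ℝ g y v)]
    rw [map_add, map_smul, map_smul, (aux_Pmap_eq hP.self_of_nhds).1, k1]
    rfl
  simp [k2]
  ring

lemma aux_main {R : ℝ} {u : E2 → ℝ} (hc : ConvexOn ℝ (ball (0:E2) R) u)
    (hu : ∀ x ∈ ball (0:E2) R, ContDiffAt ℝ 2 u x)
    (h11 : ∀ x ∈ ball (0:E2) R, 0 < hess u x 0 0) {x : E2} (hx : x ∈ ball (0:E2) R) :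
    pt (fderiv ℝ (pLeg R u) (Pmap u x) (e2 0)) ((Pmap u x) 1) = x ∧
    detHess u x * hess (pLeg R u) (Pmap u x) 0 0 + hess (pLeg R u) (Pmap u x) 1 1 = 0 := by
  obtain ⟨g, hgx, hgC, hP⟩ := aux_inv (hu x hx) (h11 x hx)
  have hPx : Pmap u x 1 = x 1 := by simp [Pmap, aux_pt1]
  set y := Pmap u x with hy
  have hb : ∀ᶠ z in 𝓝 y, g z ∈ ball (0:E2) R := by
    apply hgC.continuousAt
    rw [hgx]
    exact isOpen_ball.mem_nhds hx
  have hd : ∀ᶠ z in 𝓝 y, DifferentiableAt ℝ g z := by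
    filter_upwards [hgC.eventually (by norm_num)] with z hz
    exact hz.differentiableAt (by norm_num)
  have hE : fderiv ℝ (pLeg R u) =ᶠ[𝓝 y] fun z =>
      (g z 0) • (EuclideanSpace.proj 0 : E2 →L[ℝ] ℝ)
      - (fderiv ℝ u (g z) (e2 1)) • (EuclideanSpace.proj 1 : E2 →L[ℝ] ℝ) := by
    filter_upwards [hd, hP.eventually_nhds, hb.eventually_nhds] with z a b c
    exact aux_first hc hu a b c
  have hG := hd.self_of_nhds.hasFDerivAt
  have h1 : ContDiffAt ℝ 1 (fderiv ℝ u) x := (hu x hx).fderiv_right (by norm_num)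
  have hH := (h1.differentiableAt (by norm_num)).hasFDerivAt
  set H := fderiv ℝ (fderiv ℝ u) x with hHdef
  set D := fderiv ℝ g y with hDdef
  have hj : ∀ j, HasFDerivAt (fun z => fderiv ℝ u (g z) (e2 j)) ((H.flip (e2 j)).comp D) y := by
    intro j
    have hH' : HasFDerivAt (fderiv ℝ u) H (g y) := by rw [hgx]; exact hH
    convert! (hH'.comp y hG).clm_apply (hasFDerivAt_const (e2 j) y) using 1
    ext v; simp
  have hg0 := (aux_coord (g y) 0).comp y hG
  have hg1 := (aux_coord (g y) 1).comp y hG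
  have hg1' : (EuclideanSpace.proj 1 : E2 →L[ℝ] ℝ).comp D =
      (EuclideanSpace.proj 1 : E2 →L[ℝ] ℝ) := by
    refine hg1.unique ((aux_coord y 1).congr_of_eventuallyEq ?_)
    filter_upwards [hP] with z hz
    exact (aux_Pmap_eq hz).2
  have hg0' : (H.flip (e2 0)).comp D = (EuclideanSpace.proj 0 : E2 →L[ℝ] ℝ) := by
    refine (hj 0).unique ((aux_coord y 0).congr_of_eventuallyEq ?_)
    filter_upwards [hP] with z hz
    exact (aux_Pmap_eq hz).1
  have k1 : ∀ v, (D v) 1 = v 1 := fun v => congrArg (fun l : E2 →L[ℝ] ℝ => l v) hg1'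
  have k0 : ∀ v, H (D v) (e2 0) = v 0 := fun v => congrArg (fun l : E2 →L[ℝ] ℝ => l v) hg0'
  have kk : ∀ v j, H (D v) (e2 j) = D v 0 * hess u x 0 j + v 1 * hess u x 1 j := by
    intro v j
    conv_lhs => rw [aux_decomp (D v)]
    rw [map_add, map_smul, map_smul, k1, aux_hess, aux_hess]
    rfl
  have hS := ((hg0.smul_const (EuclideanSpace.proj 0 : E2 →L[ℝ] ℝ)).sub
    ((hj 1).smul_const (EuclideanSpace.proj 1 : E2 →L[ℝ] ℝ))).congr_of_eventuallyEq hE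
  have a00 : hess (pLeg R u) y 0 0 = D (e2 0) 0 := by
    rw [aux_hess, hS.fderiv]; simp [e2]
  have a11 : hess (pLeg R u) y 1 1 = - H (D (e2 1)) (e2 1) := by
    rw [aux_hess, hS.fderiv]; simp [e2]
  constructor
  · rw [hE.self_of_nhds]
    beta_reduce
    rw [hgx, hPx]
    simp [e2]
    exact aux_pt_eta x
  · rw [a00, a11, kk]
    have p := kk (e2 0) 0
    have q := kk (e2 1) 0
    rw [k0] at p q
    have w00 : (e2 0) 0 = 1 := by simp [e2]
    have w01 : (e2 0) 1 = 0 := by simp [e2]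
    have w10 : (e2 1) 0 = 0 := by simp [e2]
    have w11 : (e2 1) 1 = 1 := by simp [e2]
    rw [w00, w01] at p
    rw [w10, w11] at q
    rw [w11, detHess, Matrix.det_fin_two]
    have hpos := (h11 x hx).ne'
    apply mul_left_cancel₀ hpos
    linear_combination (-(hess u x 0 0 * hess u x 1 1 - hess u x 0 1 * hess u x 1 0)) * p +
      (hess u x 0 1) * q

/-- under the hypotheses of Statement 7, the partial Legendre
transform u* satisfies the quasilinear equation
f(∂_{y₁}u*(y), y₂) ∂_{y₁y₁}u*(y) + ∂_{y₂y₂}u*(y) = 0 on 𝒫(B_R(0)); in particular,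
if f ≡ 1 then u* is harmonic on 𝒫(B_R(0)). -/
theorem partialLegendre_quasilinear_equation
    (R : ℝ) (hR : 0 < R) (u f : E2 → ℝ)
    (hu : ContDiffOn ℝ 2 u (ball (0:E2) R))
    (hconv : StrictConvexOn ℝ (ball (0:E2) R) u)
    (h11 : ∀ x ∈ ball (0:E2) R, 0 < hess u x 0 0)
    (hMA : ∀ x ∈ ball (0:E2) R, detHess u x = f x)
    (hfpos : ∀ x ∈ ball (0:E2) R, 0 < f x) :
    (∀ y ∈ Pmap u '' ball (0:E2) R,
      f (pt (fderiv ℝ (pLeg R u) y (e2 0)) (y 1)) * hess (pLeg R u) y 0 0 +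
        hess (pLeg R u) y 1 1 = 0) ∧
    ((∀ x ∈ ball (0:E2) R, f x = 1) →
      ∀ y ∈ Pmap u '' ball (0:E2) R,
        hess (pLeg R u) y 0 0 + hess (pLeg R u) y 1 1 = 0) := by
  have hu' : ∀ x ∈ ball (0:E2) R, ContDiffAt ℝ 2 u x := fun x hx =>
    hu.contDiffAt (isOpen_ball.mem_nhds hx)
  have key : ∀ y ∈ Pmap u '' ball (0:E2) R,
      f (pt (fderiv ℝ (pLeg R u) y (e2 0)) (y 1)) * hess (pLeg R u) y 0 0 +
        hess (pLeg R u) y 1 1 = 0 := by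
    rintro _ ⟨x, hx, rfl⟩
    obtain ⟨h1, h2⟩ := aux_main hconv.convexOn hu' h11 hx
    rw [h1, ← hMA x hx]
    exact h2
  refine ⟨key, ?_⟩
  rintro hf _ ⟨x, hx, rfl⟩
  have h := key _ ⟨x, hx, rfl⟩
  rw [(aux_main hconv.convexOn hu' h11 hx).1, hf x hx, one_mul] at h
  exact h
end
end

section
/- Let u be a C² convex function on a neighborhood of the closed disc B̄_t(0) ⊂ ℝ² satisfying det D²u ≥ C₀⁻¹ > 0, u(0) = 0, Du(0) = 0, and u > 0 on B̄_t(0) \ {0}. Assume the minimum m := min_{∂B_t(0)} u is attained at the point (t,0), and let b := sup_{B̄_t(0)}|Du|. Then m ≥ (b·t/2) / ( exp(128·C₀·b²/t²) − 1 ). -/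
open Metric Set MeasureTheory

noncomputable section

lemma core_slice (t C₀ K : ℝ) (ht : 0 < t) (hC₀ : 0 < C₀) (hK : 0 < K)
    (f f1 f11 g : ℝ → ℝ)
    (h1 : ∀ x ∈ Icc 0 (3*t/4), HasDerivAt f (f1 x) x)
    (h2 : ∀ x ∈ Icc 0 (3*t/4), HasDerivAt f1 (f11 x) x)
    (hc : ContinuousOn f11 (Icc 0 (3*t/4))) (hg : ContinuousOn g (Icc 0 (3*t/4)))
    (hn : ∀ x ∈ Icc 0 (3*t/4), 0 ≤ f11 x)
    (hd : ∀ x ∈ Icc 0 (3*t/4), C₀⁻¹ ≤ f11 x * g x)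
    (hf0 : ∀ x ∈ Icc 0 (3*t/4), 0 ≤ f x) (hfK : ∀ x ∈ Icc 0 (3*t/4), f x ≤ K) :
    t^3 / (128 * C₀) / K ≤ ∫ x in (t/4)..(t/2), g x := by
  have hmono : MonotoneOn f1 (Icc 0 (3*t/4)) := by
    apply monotoneOn_of_hasDerivWithinAt_nonneg (convex_Icc _ _) (f' := f11)
    · exact fun x hx => (h2 x hx).continuousAt.continuousWithinAt
    · exact fun x hx => (h2 x (interior_subset hx)).hasDerivWithinAt
    · exact fun x hx => hn x (interior_subset hx)
  have hup : f1 (t/2) ≤ 4 * K / t := by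
    obtain ⟨c, hc, hc'⟩ := exists_hasDerivAt_eq_slope f f1 (show t/2 < 3*t/4 by linarith)
      (fun x hx => (h1 x ⟨by linarith [hx.1], hx.2⟩).continuousAt.continuousWithinAt)
      (fun x hx => h1 x ⟨by linarith [hx.1], hx.2.le⟩)
    have e1 : f1 (t/2) ≤ f1 c := hmono ⟨by linarith, by linarith⟩ ⟨by linarith [hc.1], hc.2.le⟩ hc.1.le
    rw [hc'] at e1
    refine e1.trans ?_
    rw [div_le_div_iff₀ (by linarith) ht]
    have a1 := hf0 (t/2) ⟨by linarith, by linarith⟩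
    have a2 := hfK (3*t/4) ⟨by linarith, by linarith⟩
    nlinarith
  have hlo : -(4 * K / t) ≤ f1 (t/4) := by
    obtain ⟨c, hc, hc'⟩ := exists_hasDerivAt_eq_slope f f1 (show 0 < t/4 by linarith)
      (fun x hx => (h1 x ⟨by linarith [hx.1], by linarith [hx.2]⟩).continuousAt.continuousWithinAt)
      (fun x hx => h1 x ⟨by linarith [hx.1], by linarith [hx.2]⟩)
    have e1 : f1 c ≤ f1 (t/4) := hmono ⟨by linarith [hc.1], by linarith [hc.2]⟩ ⟨by linarith, by linarith⟩ hc.2.le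
    rw [hc'] at e1
    refine le_trans ?_ e1
    rw [← neg_div, div_le_div_iff₀ ht (by linarith)]
    have a1 := hf0 (t/4) ⟨by linarith, by linarith⟩
    have a2 := hfK 0 ⟨by linarith, by linarith⟩
    nlinarith
  have hsub : uIcc (t/4) (t/2) ⊆ Icc 0 (3*t/4) := by
    rw [uIcc_of_le (by linarith)]; exact Icc_subset_Icc (by linarith) (by linarith)
  have i11 : IntervalIntegrable f11 volume (t/4) (t/2) := (hc.mono hsub).intervalIntegrable
  have ig : IntervalIntegrable g volume (t/4) (t/2) := (hg.mono hsub).intervalIntegrable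
  have I11 : ∫ x in (t/4)..(t/2), f11 x = f1 (t/2) - f1 (t/4) :=
    intervalIntegral.integral_eq_sub_of_hasDerivAt (fun x hx => h2 x (hsub hx)) i11
  set k : ℝ := 32 * K / t^2 with hk
  have hk0 : 0 < k := by positivity
  have hI : ∫ x in (t/4)..(t/2), (C₀⁻¹ * (2/k) - C₀⁻¹ / k^2 * f11 x) ≤ ∫ x in (t/4)..(t/2), g x := by
    apply intervalIntegral.integral_mono_on (by linarith)
    · exact (intervalIntegrable_const).sub (i11.const_mul _)
    · exact ig
    · intro x hx
      have hx' : x ∈ Icc 0 (3*t/4) := hsub (by rwa [uIcc_of_le (by linarith)])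
      have d := hd x hx'
      have n := hn x hx'
      have hci : 0 < C₀⁻¹ := by positivity
      have n' : 0 < f11 x := by
        rcases n.eq_or_lt with h | h
        · rw [← h] at d; linarith
        · exact h
      have key : C₀⁻¹ * (2 * k - f11 x) ≤ g x * k^2 := by
        have : f11 x * (C₀⁻¹ * (2 * k - f11 x)) ≤ f11 x * (g x * k^2) := by
          nlinarith [mul_nonneg hci.le (sq_nonneg (k - f11 x)), mul_le_mul_of_nonneg_right d (sq_nonneg k)]
        exact le_of_mul_le_mul_left this n'
      have : C₀⁻¹ * (2/k) - C₀⁻¹ / k^2 * f11 x = C₀⁻¹ * (2 * k - f11 x) / k^2 := by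
        field_simp
      rw [this, div_le_iff₀ (by positivity)]
      exact key
  refine le_trans ?_ hI
  rw [intervalIntegral.integral_sub intervalIntegrable_const (i11.const_mul _),
    intervalIntegral.integral_const, intervalIntegral.integral_const_mul, I11, smul_eq_mul]
  have hD : f1 (t/2) - f1 (t/4) ≤ 8 * K / t := by
    have : 8 * K / t = 4 * K / t + 4 * K / t := by ring
    linarith
  have := mul_le_mul_of_nonneg_left hD (show 0 ≤ C₀⁻¹ / k^2 by positivity)
  have e : (t/2 - t/4) * (C₀⁻¹ * (2/k)) - C₀⁻¹ / k^2 * (8 * K / t) = t^3 / (128 * C₀) / K := by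
    rw [hk]; field_simp; norm_num
  linarith

lemma core (t C₀ b m : ℝ) (ht : 0 < t) (hC₀ : 0 < C₀) (hb : 0 < b) (hm : 0 < m)
    (v v1 v2 v11 v22 : ℝ → ℝ → ℝ)
    (h1 : ∀ x ∈ Icc 0 (3*t/4), ∀ y ∈ Icc 0 (t/2), HasDerivAt (fun x => v x y) (v1 x y) x)
    (h2 : ∀ x ∈ Icc 0 (3*t/4), ∀ y ∈ Icc 0 (t/2), HasDerivAt (fun y => v x y) (v2 x y) y)
    (h11 : ∀ x ∈ Icc 0 (3*t/4), ∀ y ∈ Icc 0 (t/2), HasDerivAt (fun x => v1 x y) (v11 x y) x)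
    (h22 : ∀ x ∈ Icc 0 (3*t/4), ∀ y ∈ Icc 0 (t/2), HasDerivAt (fun y => v2 x y) (v22 x y) y)
    (hc11 : ContinuousOn (Function.uncurry v11) (Icc 0 (3*t/4) ×ˢ Icc 0 (t/2)))
    (hc22 : ContinuousOn (Function.uncurry v22) (Icc 0 (3*t/4) ×ˢ Icc 0 (t/2)))
    (hn : ∀ x ∈ Icc 0 (3*t/4), ∀ y ∈ Icc 0 (t/2), 0 ≤ v11 x y)
    (hd : ∀ x ∈ Icc 0 (3*t/4), ∀ y ∈ Icc 0 (t/2), C₀⁻¹ ≤ v11 x y * v22 x y)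
    (h0 : ∀ x ∈ Icc 0 (3*t/4), ∀ y ∈ Icc 0 (t/2), 0 ≤ v x y)
    (hB : ∀ x ∈ Icc 0 (3*t/4), ∀ y ∈ Icc 0 (t/2), |v2 x y| ≤ b)
    (hm0 : ∀ x ∈ Icc 0 (3*t/4), v x 0 ≤ m) :
    Real.log (m + b * (t/2)) - Real.log m ≤ 64 * C₀ * b^2 / t^2 := by
  have hup : ∀ x ∈ Icc 0 (3*t/4), ∀ y ∈ Icc 0 (t/2), v x y ≤ m + b * y := by
    intro x hx y hy
    have := norm_image_sub_le_of_norm_deriv_le_segment' (f := fun y => v x y) (f' := fun y => v2 x y)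
      (a := 0) (b := t/2) (C := b)
      (fun z hz => (h2 x hx z hz).hasDerivWithinAt)
      (fun z hz => hB x hx z ⟨hz.1, hz.2.le⟩) y hy
    have a := (abs_le.1 this).2
    have := hm0 x hx
    simp only [sub_zero] at a
    linarith
  set c := t^3 / (128 * C₀) with hcdef
  have hsl : ∀ s ∈ Icc 0 (t/2), c / (m + b * s) ≤ ∫ x in (t/4)..(t/2), v22 x s := by
    intro s hs
    have hcs : ContinuousOn (fun x : ℝ => (x, s)) (Icc 0 (3*t/4)) := by fun_prop
    have hms : MapsTo (fun x : ℝ => (x, s)) (Icc 0 (3*t/4)) (Icc 0 (3*t/4) ×ˢ Icc 0 (t/2)) :=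
      fun x hx => ⟨hx, hs⟩
    exact core_slice t C₀ (m + b * s) ht hC₀ (by nlinarith [hs.1])
      (fun x => v x s) (fun x => v1 x s) (fun x => v11 x s) (fun x => v22 x s)
      (fun x hx => h1 x hx s hs) (fun x hx => h11 x hx s hs)
      (hc11.comp hcs hms) (hc22.comp hcs hms)
      (fun x hx => hn x hx s hs) (fun x hx => hd x hx s hs) (fun x hx => h0 x hx s hs)
      (fun x hx => hup x hx s hs)
  have hint : Integrable (Function.uncurry v22)
      ((volume.restrict (uIoc (t/4) (t/2))).prod (volume.restrict (uIoc 0 (t/2)))) := by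
    rw [Measure.prod_restrict]
    have : IntegrableOn (Function.uncurry v22) (Icc 0 (3*t/4) ×ˢ Icc 0 (t/2))
        ((volume : Measure ℝ).prod (volume : Measure ℝ)) :=
      hc22.integrableOn_compact (isCompact_Icc.prod isCompact_Icc)
    refine this.mono_set ?_
    rw [uIoc_of_le (by linarith), uIoc_of_le (by linarith)]
    exact prod_mono (fun x hx => ⟨by linarith [hx.1], by linarith [hx.2]⟩) Ioc_subset_Icc_self
  have hswap := intervalIntegral_intervalIntegral_swap (F := v22) (a := t/4) (b := t/2) (c := 0) (d := t/2)
    (by rw [IntegrableOn, Measure.volume_eq_prod, ← Measure.prod_restrict]; exact hint)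
  have hR : IntervalIntegrable (fun s => ∫ x in (t/4)..(t/2), v22 x s) volume 0 (t/2) := by
    rw [intervalIntegrable_iff]
    have := hint.integral_prod_right
    simp only [intervalIntegral.integral_of_le (show t/4 ≤ t/2 by linarith)]
    rw [uIoc_of_le (show t/4 ≤ t/2 by linarith)] at this
    exact this
  have hL : ∫ x in (t/4)..(t/2), ∫ y in (0:ℝ)..(t/2), v22 x y ≤ b * t / 2 := by
    have : ∀ x ∈ uIoc (t/4) (t/2), ‖∫ y in (0:ℝ)..(t/2), v22 x y‖ ≤ 2 * b := by
      intro x hx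
      rw [uIoc_of_le (by linarith)] at hx
      have hx' : x ∈ Icc 0 (3*t/4) := ⟨by linarith [hx.1], by linarith [hx.2]⟩
      have hu : uIcc 0 (t/2) = Icc 0 (t/2) := uIcc_of_le (by linarith)
      rw [intervalIntegral.integral_eq_sub_of_hasDerivAt (f := fun y => v2 x y)
        (fun y hy => h22 x hx' y (hu ▸ hy))]
      · have a1 := abs_le.1 (hB x hx' (t/2) ⟨by linarith, by linarith⟩)
        have a2 := abs_le.1 (hB x hx' 0 ⟨by linarith, by linarith⟩)
        rw [Real.norm_eq_abs, abs_le]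
        constructor <;> linarith
      · apply ContinuousOn.intervalIntegrable
        rw [hu]
        exact hc22.comp (f := fun y : ℝ => (x, y)) (by fun_prop) (fun y hy => ⟨hx', hy⟩)
    have := intervalIntegral.norm_integral_le_of_norm_le_const this
    have h3 := (le_abs_self _).trans this
    rw [abs_of_nonneg (by linarith)] at h3
    linarith
  have hpos : ∀ s ∈ uIcc 0 (t/2), 0 < m + b * s := by
    intro s hs
    rw [uIcc_of_le (by linarith)] at hs
    nlinarith [hs.1]
  have hci : IntervalIntegrable (fun s => c / (m + b * s)) volume 0 (t/2) := by
    apply ContinuousOn.intervalIntegrable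
    exact ContinuousOn.div (by fun_prop) (by fun_prop) (fun s hs => (hpos s hs).ne')
  have hlog : ∫ s in (0:ℝ)..(t/2), c / (m + b * s) = c / b * (Real.log (m + b * (t/2)) - Real.log m) := by
    rw [intervalIntegral.integral_eq_sub_of_hasDerivAt (f := fun s => c / b * Real.log (m + b * s)) _ hci]
    · simp; ring
    · intro s hs
      have hl : HasDerivAt (fun s => m + b * s) b s := by
        simpa using ((hasDerivAt_id s).const_mul b).const_add m
      have hne := (hpos s hs).ne'
      refine ((hl.log hne).const_mul (c / b)).congr_deriv ?_
      field_simp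
  have hmono := intervalIntegral.integral_mono_on (by linarith) hci hR hsl
  rw [hlog, ← hswap] at hmono
  have h := hmono.trans hL
  have hcp : 0 < c / b := by positivity
  have e : 64 * C₀ * b^2 / t^2 = (b * t / 2) / (c / b) := by
    rw [hcdef]; field_simp; norm_num
  rw [e, le_div_iff₀ hcp]
  linarith

lemma pt_eq (x y : ℝ) : pt x y = x • e2 0 + y • e2 1 := by
  ext i
  fin_cases i <;> simp [pt, e2]

lemma pt_mem {t x y : ℝ} (ht : 0 < t) (h : x^2 + y^2 < t^2) : pt x y ∈ ball (0:E2) t := by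
  rw [mem_ball_zero_iff, EuclideanSpace.norm_eq, Real.sqrt_lt' ht]
  simpa [pt, Fin.sum_univ_two] using h

lemma hasDerivAt_pt1 (x y : ℝ) : HasDerivAt (fun x => pt x y) (e2 0) x := by
  simp only [pt_eq]
  simpa using ((hasDerivAt_id x).smul_const (e2 0)).add_const (y • e2 1)

lemma hasDerivAt_pt2 (x y : ℝ) : HasDerivAt (fun y => pt x y) (e2 1) y := by
  simp only [pt_eq]
  simpa using ((hasDerivAt_id y).smul_const (e2 1)).const_add (x • e2 0)

lemma continuous_pt : Continuous (fun p : ℝ × ℝ => pt p.1 p.2) := by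
  simp only [pt_eq]
  fun_prop

lemma norm_e2 (i : Fin 2) : ‖e2 i‖ = 1 := by simp [e2]

lemma region {t x y : ℝ} (ht : 0 < t) (hx : x ∈ Icc 0 (3*t/4)) (hy : y ∈ Icc 0 (t/2)) :
    x^2 + y^2 < t^2 := by
  have h1 : x^2 ≤ (3*t/4)^2 := pow_le_pow_left₀ hx.1 hx.2 2
  have h2 : y^2 ≤ (t/2)^2 := pow_le_pow_left₀ hy.1 hy.2 2
  nlinarith [sq_pos_of_pos ht]

lemma hasDerivAt_clm_const {G : ℝ → (E2 →L[ℝ] ℝ)} {G' : E2 →L[ℝ] ℝ} {x : ℝ}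
    (h : HasDerivAt G G' x) (e : E2) : HasDerivAt (fun z => G z e) (G' e) x :=
  (ContinuousLinearMap.apply ℝ ℝ e).hasFDerivAt.comp_hasDerivAt x h

/-- Lemma 2.6, lower bound for the modulus of convexity:
if u is C² and convex on a neighborhood of the closed disc B̄_t(0), with
det D²u ≥ C₀⁻¹ > 0, u(0) = 0, Du(0) = 0, u > 0 away from the origin, the minimum
m of u over ∂B_t(0) is attained at (t,0), and b bounds |Du| on B̄_t(0), then
m ≥ (bt/2)/(exp(128 C₀ b²/t²) − 1). -/
theorem modulus_of_convexity_lower_bound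
    (t C₀ b : ℝ) (ht : 0 < t) (hC₀ : 0 < C₀)
    (u : E2 → ℝ) (U : Set E2) (hU : IsOpen U) (hUt : closedBall (0:E2) t ⊆ U)
    (hu : ContDiffOn ℝ 2 u U)
    (hconv : ConvexOn ℝ (closedBall (0:E2) t) u)
    (hdet : ∀ x ∈ closedBall (0:E2) t, C₀⁻¹ ≤ detHess u x)
    (hu0 : u 0 = 0)
    (hDu0 : gradient u 0 = 0)
    (hpos : ∀ x ∈ closedBall (0:E2) t, x ≠ 0 → 0 < u x)
    (hmin : ∀ x ∈ sphere (0:E2) t, u (pt t 0) ≤ u x)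
    (hb : ∀ x ∈ closedBall (0:E2) t, ‖gradient u x‖ ≤ b) :
    u (pt t 0) ≥ (b * t / 2) / (Real.exp (128 * C₀ * b ^ 2 / t ^ 2) - 1) := by
  have hb0 : 0 ≤ b := (norm_nonneg _).trans (hb 0 (mem_closedBall_self ht.le))
  have hptt : pt t 0 ∈ closedBall (0:E2) t := by
    rw [mem_closedBall_zero_iff, EuclideanSpace.norm_eq]
    simp [pt, Fin.sum_univ_two, Real.sqrt_sq ht.le]
  have hptne : pt t 0 ≠ 0 := by
    intro h
    have : (pt t 0) 0 = 0 := by rw [h]; rfl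
    simp [pt] at this
    linarith
  have hm : 0 < u (pt t 0) := hpos _ hptt hptne
  rcases hb0.eq_or_lt with hbz | hbp
  · rw [← hbz]; simp; exact hm.le
  have hbc : ball (0:E2) t ⊆ closedBall 0 t := ball_subset_closedBall
  have hUn : ∀ p ∈ ball (0:E2) t, U ∈ nhds p := fun p hp => hU.mem_nhds (hUt (hbc hp))
  have hcd : ∀ p ∈ ball (0:E2) t, ContDiffAt ℝ 2 u p := fun p hp => hu.contDiffAt (hUn p hp)
  have hcd1 : ∀ p ∈ ball (0:E2) t, ContDiffAt ℝ 1 (fderiv ℝ u) p := fun p hp =>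
    (hcd p hp).fderiv_right (m := 1) (by norm_num)
  have hcd2 : ∀ p ∈ ball (0:E2) t, ContinuousAt (fderiv ℝ (fderiv ℝ u)) p := fun p hp =>
    ((hcd1 p hp).fderiv_right (m := 0) (by norm_num)).continuousAt
  have hD1 : ∀ p ∈ ball (0:E2) t, HasFDerivAt u (fderiv ℝ u p) p := fun p hp =>
    ((hcd p hp).differentiableAt (by norm_num)).hasFDerivAt
  have hD2 : ∀ p ∈ ball (0:E2) t, HasFDerivAt (fderiv ℝ u) (fderiv ℝ (fderiv ℝ u) p) p := fun p hp =>
    ((hcd1 p hp).differentiableAt (by norm_num)).hasFDerivAt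
  have R : ∀ x ∈ Icc 0 (3*t/4), ∀ y ∈ Icc 0 (t/2), pt x y ∈ ball (0:E2) t :=
    fun x hx y hy => pt_mem ht (region ht hx hy)
  have hx1 : ∀ x y, pt x y ∈ ball (0:E2) t →
      HasDerivAt (fun x => u (pt x y)) (fderiv ℝ u (pt x y) (e2 0)) x := fun x y h =>
    (hD1 _ h).comp_hasDerivAt x (hasDerivAt_pt1 x y)
  have hx11 : ∀ x y, pt x y ∈ ball (0:E2) t →
      HasDerivAt (fun x => fderiv ℝ u (pt x y) (e2 0))
        (fderiv ℝ (fderiv ℝ u) (pt x y) (e2 0) (e2 0)) x := fun x y h =>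
    hasDerivAt_clm_const (((hD2 _ h).comp_hasDerivAt x (hasDerivAt_pt1 x y))) (e2 0)
  have hy1 : ∀ x y, pt x y ∈ ball (0:E2) t →
      HasDerivAt (fun y => u (pt x y)) (fderiv ℝ u (pt x y) (e2 1)) y := fun x y h =>
    (hD1 _ h).comp_hasDerivAt y (hasDerivAt_pt2 x y)
  have hy11 : ∀ x y, pt x y ∈ ball (0:E2) t →
      HasDerivAt (fun y => fderiv ℝ u (pt x y) (e2 1))
        (fderiv ℝ (fderiv ℝ u) (pt x y) (e2 1) (e2 1)) y := fun x y h =>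
    hasDerivAt_clm_const (((hD2 _ h).comp_hasDerivAt y (hasDerivAt_pt2 x y))) (e2 1)
  have hcont : ∀ i, ContinuousOn (Function.uncurry fun x y =>
      fderiv ℝ (fderiv ℝ u) (pt x y) (e2 i) (e2 i)) (Icc 0 (3*t/4) ×ˢ Icc 0 (t/2)) := by
    rintro i ⟨x, y⟩ ⟨hx, hy⟩
    apply ContinuousAt.continuousWithinAt
    have h := hcd2 (pt x y) (R x hx y hy)
    have h' : ContinuousAt (fun p : ℝ × ℝ => fderiv ℝ (fderiv ℝ u) (pt p.1 p.2)) (x, y) :=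
      ContinuousAt.comp (f := fun p : ℝ × ℝ => pt p.1 p.2) (x := (x, y)) h continuous_pt.continuousAt
    exact (h'.clm_apply continuousAt_const).clm_apply continuousAt_const
  have hn : ∀ x y, pt x y ∈ ball (0:E2) t →
      0 ≤ fderiv ℝ (fderiv ℝ u) (pt x y) (e2 0) (e2 0) := by
    intro x y h
    set S : Set ℝ := (fun x => pt x y) ⁻¹' ball (0:E2) t with hS
    have hSo : IsOpen S := isOpen_ball.preimage
      (continuous_pt.comp (Continuous.prodMk continuous_id continuous_const))
    have haff : (fun x => pt x y) = AffineMap.lineMap (pt 0 y) (pt 1 y) := by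
      funext z
      rw [AffineMap.lineMap_apply_module]
      simp only [pt_eq]
      module
    have hconvS : ConvexOn ℝ S (fun x => u (pt x y)) := by
      have := (hconv.subset hbc (convex_ball _ _)).comp_affineMap
        (AffineMap.lineMap (pt 0 y) (pt 1 y) : ℝ →ᵃ[ℝ] E2)
      rw [← haff] at this
      exact this
    have hmono : MonotoneOn (fun x => fderiv ℝ u (pt x y) (e2 0)) S := by
      have := hconvS.monotoneOn_derivWithin
        (fun z hz => (hx1 z y hz).differentiableAt.differentiableWithinAt)
      refine this.congr ?_
      intro z hz
      exact (hx1 z y hz).hasDerivWithinAt.derivWithin (hSo.uniqueDiffWithinAt hz)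
    have h2 := hmono.derivWithin_nonneg (x := x)
    rwa [(hx11 x y h).hasDerivWithinAt.derivWithin (hSo.uniqueDiffWithinAt h)] at h2
  have hd : ∀ p ∈ ball (0:E2) t, C₀⁻¹ ≤ fderiv ℝ (fderiv ℝ u) p (e2 0) (e2 0) *
      fderiv ℝ (fderiv ℝ u) p (e2 1) (e2 1) := by
    intro p hp
    have h := hdet p (hbc hp)
    have hs : fderiv ℝ (fderiv ℝ u) p (e2 0) (e2 1) = fderiv ℝ (fderiv ℝ u) p (e2 1) (e2 0) :=
      (hcd p hp).isSymmSndFDerivAt (by simp) _ _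
    simp only [detHess, hess, Matrix.det_fin_two, Matrix.of_apply, iteratedFDeriv_two_apply,
      Matrix.cons_val_zero, Matrix.cons_val_one] at h
    rw [hs] at h
    nlinarith [mul_self_nonneg (fderiv ℝ (fderiv ℝ u) p (e2 1) (e2 0))]
  have hB : ∀ p ∈ ball (0:E2) t, |fderiv ℝ u p (e2 1)| ≤ b := by
    intro p hp
    have h := (fderiv ℝ u p).le_opNorm (e2 1)
    rw [norm_e2, mul_one, ← toDual_gradient, LinearIsometryEquiv.norm_map] at h
    rw [← toDual_gradient]
    exact h.trans (hb p (hbc hp))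
  have h0 : ∀ p ∈ ball (0:E2) t, 0 ≤ u p := by
    intro p hp
    by_cases h : p = 0
    · rw [h, hu0]
    · exact (hpos p (hbc hp) h).le
  have hm0 : ∀ x ∈ Icc 0 (3*t/4), u (pt x 0) ≤ u (pt t 0) := by
    intro x hx
    have hr0 : 0 ≤ x / t := div_nonneg hx.1 ht.le
    have hr1 : x / t ≤ 1 := by rw [div_le_one ht]; linarith [hx.2]
    have := hconv.2 (mem_closedBall_self ht.le) hptt (sub_nonneg.2 hr1) hr0 (by ring)
    have e : (1 - x/t) • (0:E2) + (x/t) • pt t 0 = pt x 0 := by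
      simp only [pt_eq, smul_zero, zero_smul, add_zero, zero_add, smul_smul]
      rw [div_mul_cancel₀ _ ht.ne']
    rw [e, hu0] at this
    simp only [smul_eq_mul, mul_zero, zero_add] at this
    nlinarith
  have key := core t C₀ b (u (pt t 0)) ht hC₀ hbp hm (fun x y => u (pt x y))
    (fun x y => fderiv ℝ u (pt x y) (e2 0)) (fun x y => fderiv ℝ u (pt x y) (e2 1))
    (fun x y => fderiv ℝ (fderiv ℝ u) (pt x y) (e2 0) (e2 0))
    (fun x y => fderiv ℝ (fderiv ℝ u) (pt x y) (e2 1) (e2 1))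
    (fun x hx y hy => hx1 x y (R x hx y hy)) (fun x hx y hy => hy1 x y (R x hx y hy))
    (fun x hx y hy => hx11 x y (R x hx y hy)) (fun x hx y hy => hy11 x y (R x hx y hy))
    (hcont 0) (hcont 1)
    (fun x hx y hy => hn x y (R x hx y hy)) (fun x hx y hy => hd _ (R x hx y hy))
    (fun x hx y hy => h0 _ (R x hx y hy)) (fun x hx y hy => hB _ (R x hx y hy)) hm0
  set m := u (pt t 0) with hmdef
  have hpb : 0 < m + b * (t/2) := by positivity
  rw [← Real.log_div hpb.ne' hm.ne'] at key
  have hle : 64 * C₀ * b^2 / t^2 ≤ 128 * C₀ * b^2 / t^2 := by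
    gcongr; norm_num
  have h3 := (Real.log_le_iff_le_exp (by positivity)).1 (key.trans hle)
  rw [div_le_iff₀ hm] at h3
  have h4 : 1 < Real.exp (128 * C₀ * b^2 / t^2) := Real.one_lt_exp_iff.2 (by positivity)
  rw [ge_iff_le, div_le_iff₀ (by linarith)]
  linarith
end
end
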